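/- Let q ≥ 4 be a prime power with q even. Then the group PSL(2, q) = SL(2, q) has exactly one conjugacy class of elements of order 2. -/

import Mathlib

/-!
In characteristic `2`, an involution `x` is the same as an `x ≠ 1` with `(x - 1) ^ 2 = 0`. For such
an `x` in `SL₂(F)`, put `N = x - 1` and choose `v` with `N v ≠ 0`: in the basis `(N v, v)`, rescaled
to have determinant `1`, `x` becomes a transvection `1 + b E₀₁` with `b ≠ 0`. Conjugation by
`diag(a, a⁻¹)` multiplies `b` by `a ^ 2`, and in a perfect field of characteristic `2` every element
is a square, so `b` can be brought to `1`.
-/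

open Matrix.SpecialLinearGroup
open scoped Matrix MatrixGroups

section Transvection

variable {n R : Type*} [DecidableEq n] [Fintype n] [CommRing R]

theorem transvection_eq_one_iff {i j : n} (hij : i ≠ j) {b : R} :
    transvection hij b = 1 ↔ b = 0 := by
  refine ⟨fun h ↦ ?_, fun h ↦ h ▸ transvection_coeff_zero hij⟩
  rw [← transvection_mem_center_iff hij, h]
  exact one_mem _

theorem transvection_pow {i j : n} (hij : i ≠ j) (b : R) (k : ℕ) :
    transvection hij b ^ k = transvection hij (k • b) := by
  induction k with
  | zero => simp
  | succ k ih => rw [pow_succ, ih, ← transvection_add, succ_nsmul]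

theorem orderOf_transvection {i j : n} (hij : i ≠ j) (b : R) :
    orderOf (transvection hij b) = addOrderOf b := by
  rw [← orderOf_ofAdd_eq_addOrderOf, orderOf_eq_orderOf_iff]
  intro k
  rw [transvection_pow, transvection_eq_one_iff, ← ofAdd_nsmul, ofAdd_eq_one]

theorem orderOf_eq_prime_iff_sub_one_pow_eq_zero [Nonempty n] (p : ℕ) [Fact p.Prime] [CharP R p]
    {x : Matrix.SpecialLinearGroup n R} :
    orderOf x = p ↔ ((x : Matrix n n R) - 1) ^ p = 0 ∧ x ≠ 1 := by
  rw [orderOf_eq_prime_iff, sub_pow_char_of_commute p (Commute.one_right _), one_pow, sub_eq_zero,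
    ← coe_pow, ← coe_one, ← coeMonoidHom_apply, ← coeMonoidHom_apply,
    coeMonoidHom_injective.eq_iff]

end Transvection

theorem linearIndependent_apply_self_of_sq_eq_zero {R M : Type*} [Ring R] [IsDomain R]
    [AddCommGroup M] [Module R M] [Module.IsTorsionFree R M] {f : Module.End R M} (hf : f ^ 2 = 0)
    {v : M} (hv : f v ≠ 0) : LinearIndependent R ![f v, v] := by
  have hffv : f (f v) = 0 := by simpa [sq] using LinearMap.congr_fun hf v
  refine LinearIndependent.pair_iff.2 fun s t hst ↦ ?_
  have ht : t = 0 := by simpa [hffv, hv] using congrArg f hst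
  exact ⟨by simpa [ht, hv] using hst, ht⟩

theorem isConj_transvection_of_mulVec {R : Type*} [CommRing R] {x : SL(2, R)} {b : R}
    {u v : Fin 2 → R} (huv : (Matrix.of ![u, v]).det = 1) (hu : x.1 *ᵥ u = u)
    (hv : x.1 *ᵥ v = v + b • u) : IsConj (transvection zero_ne_one b) x := by
  have hdet : (Matrix.of ![u, v])ᵀ.det = 1 := by rwa [Matrix.det_transpose]
  refine isConj_iff.2 ⟨⟨(Matrix.of ![u, v])ᵀ, hdet⟩, mul_inv_eq_iff_eq_mul.2 (Subtype.ext ?_)⟩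
  change (Matrix.of ![u, v])ᵀ * Matrix.transvection 0 1 b = x.1 * (Matrix.of ![u, v])ᵀ
  ext i j
  fin_cases j
  · have hP := Matrix.mul_transvection_apply_of_ne 0 1 i 0 zero_ne_one b (Matrix.of ![u, v])ᵀ
    exact hP.trans (congrFun hu i).symm
  · have hP := Matrix.mul_transvection_apply_same 0 1 i b (Matrix.of ![u, v])ᵀ
    exact hP.trans (congrFun hv i).symm

section FinTwo

variable {F : Type*} [Field F]

theorem det_mulVec_pair_ne_zero {N : Matrix (Fin 2) (Fin 2) F} (hN : N ^ 2 = 0) {v : Fin 2 → F}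
    (hv : N *ᵥ v ≠ 0) : (Matrix.of ![N *ᵥ v, v]).det ≠ 0 := by
  have hf : N.toLin' ^ 2 = 0 := by rw [← Matrix.toLin'_pow, hN, map_zero]
  rw [← isUnit_iff_ne_zero, ← Matrix.isUnit_iff_isUnit_det,
    ← Matrix.linearIndependent_rows_iff_isUnit]
  exact linearIndependent_apply_self_of_sq_eq_zero hf hv

theorem exists_ne_zero_isConj_transvection {x : SL(2, F)}
    (hx : ((x : Matrix (Fin 2) (Fin 2) F) - 1) ^ 2 = 0) (hx1 : x ≠ 1) :
    ∃ b : F, b ≠ 0 ∧ IsConj (transvection zero_ne_one b) x := by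
  obtain ⟨N, hN⟩ : ∃ N, x.1 = 1 + N := ⟨x.1 - 1, (add_sub_cancel 1 x.1).symm⟩
  have hNN : N ^ 2 = 0 := by rwa [hN, add_sub_cancel_left] at hx
  have hN0 : N ≠ 0 := fun h ↦ hx1 (Subtype.ext (by rw [hN, h, add_zero, coe_one]))
  obtain ⟨v, hv⟩ : ∃ v, N *ᵥ v ≠ 0 := by
    by_contra! h
    exact hN0 (Matrix.ext_of_mulVec_single fun i ↦ by rw [h, Matrix.zero_mulVec])
  have hNNv : N *ᵥ N *ᵥ v = 0 := by rw [Matrix.mulVec_mulVec, ← sq, hNN, Matrix.zero_mulVec]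
  have hδ := det_mulVec_pair_ne_zero hNN hv
  set δ := (Matrix.of ![N *ᵥ v, v]).det
  have hscale (w : Fin 2 → F) :
      (Matrix.of ![δ⁻¹ • w, v]).det = δ⁻¹ * (Matrix.of ![w, v]).det := by
    simp [Matrix.det_fin_two, mul_sub, mul_assoc]
  have hdet : (Matrix.of ![δ⁻¹ • N *ᵥ v, v]).det = 1 := by rw [hscale, inv_mul_cancel₀ hδ]
  refine ⟨δ, hδ, isConj_transvection_of_mulVec hdet ?_ ?_⟩
  · rw [hN, Matrix.add_mulVec, Matrix.one_mulVec, Matrix.mulVec_smul, hNNv, smul_zero, add_zero]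
  · rw [hN, Matrix.add_mulVec, Matrix.one_mulVec, smul_inv_smul₀ hδ]

theorem isConj_transvection_sq_mul {a : F} (ha : a ≠ 0) (b : F) :
    IsConj (transvection zero_ne_one b : SL(2, F)) (transvection zero_ne_one (a ^ 2 * b)) := by
  refine isConj_iff.2 ⟨diag2 a ha, ?_⟩
  have hcomm := Matrix.commutator_diag2_transvection a ha b _ rfl
  rw [commutatorElement_def, mul_inv_eq_iff_eq_mul, ← transvection_add] at hcomm
  rw [hcomm]
  congr 1
  ring

theorem isConj_transvection_one_of_sub_one_sq_eq_zero (hF : ∀ a : F, IsSquare a) {x : SL(2, F)}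
    (hx : ((x : Matrix (Fin 2) (Fin 2) F) - 1) ^ 2 = 0) (hx1 : x ≠ 1) :
    IsConj (transvection zero_ne_one 1) x := by
  obtain ⟨b, hb, hbx⟩ := exists_ne_zero_isConj_transvection hx hx1
  obtain ⟨a, rfl⟩ := hF b
  have ha : a ≠ 0 := left_ne_zero_of_mul hb
  have hab := isConj_transvection_sq_mul ha 1
  rw [mul_one, sq] at hab
  exact hab.trans hbx

end FinTwo

theorem isSquare_of_perfectRing_two {M : Type*} [CommMonoid M] [PerfectRing M 2] (a : M) :
    IsSquare a := by
  obtain ⟨s, rfl⟩ := (PerfectRing.bijective_frobenius (R := M) (p := 2)).surjective a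
  exact IsSquare.sq s

theorem sl2_unique_involution_class_even_general (F : Type*) [Field F] [CharP F 2]
    [PerfectField F] :
    (∃ x : Matrix.SpecialLinearGroup (Fin 2) F, orderOf x = 2) ∧
      ∀ x y : Matrix.SpecialLinearGroup (Fin 2) F,
        orderOf x = 2 → orderOf y = 2 → IsConj x y := by
  have := PerfectField.toPerfectRing (K := F) 2
  have hconj (x : SL(2, F)) (hx : orderOf x = 2) : IsConj (transvection zero_ne_one 1) x :=
    have ⟨hsq, hne⟩ := (orderOf_eq_prime_iff_sub_one_pow_eq_zero 2).1 hx
    isConj_transvection_one_of_sub_one_sq_eq_zero isSquare_of_perfectRing_two hsq hne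
  refine ⟨⟨transvection zero_ne_one 1, ?_⟩, fun x y hx hy ↦ (hconj x hx).symm.trans (hconj y hy)⟩
  rw [orderOf_transvection]
  exact CharP.eq F (CharP.addOrderOf_one F) ‹CharP F 2›

/-- For `q ≥ 4` even, `PSL₂(q) = SL₂(q)` has a unique conjugacy class of
involutions. -/
theorem sl2_unique_involution_class_even (q : ℕ) (hq : 4 ≤ q) (heven : Even q)
    (F : Type*) [Field F] [Fintype F] (hcard : Fintype.card F = q) :
    (∃ x : Matrix.SpecialLinearGroup (Fin 2) F, orderOf x = 2) ∧
      ∀ x y : Matrix.SpecialLinearGroup (Fin 2) F,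
        orderOf x = 2 → orderOf y = 2 → IsConj x y := by
  have : CharP F 2 := ringChar.of_eq <|
    FiniteField.even_card_iff_char_two.2 (hcard ▸ Nat.even_iff.1 heven)
  exact sl2_unique_involution_class_even_general F
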